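/- Let G = A₁ ∗_C A₋₁ be the amalgamated free product of A₁ and A₋₁ along a finite subgroup C, where A₁ and A₋₁ are word hyperbolic groups with property (Q). Then G is word hyperbolic and has property (Q). -/

import Mathlib

universe u v w

section Defs

variable {G : Type u} [Group G]

/-- A finite generating set closed under inversion. -/
def IsSymmGen (X : Set G) : Prop :=
  X.Finite ∧ (∀ x ∈ X, x⁻¹ ∈ X) ∧ Subgroup.closure X = ⊤

/-- Word length of `g` with respect to `X`. -/
noncomputable def wordLength (X : Set G) (g : G) : ℕ :=
  sInf {n : ℕ | ∃ l : List G, l.length = n ∧ (∀ x ∈ l, x ∈ X) ∧ l.prod = g}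

/-- Word metric. -/
noncomputable def wordDist (X : Set G) (g h : G) : ℕ :=
  wordLength X (g⁻¹ * h)

/-- Gromov product with respect to the word metric. -/
noncomputable def gromovProd (X : Set G) (x y w : G) : ℝ :=
  ((wordDist X x w : ℝ) + (wordDist X y w : ℝ) - (wordDist X x y : ℝ)) / 2

end Defs

/-- A group is word hyperbolic if for some finite symmetric generating set the Gromov
product satisfies the hyperbolicity inequality. -/
def IsWordHyperbolic (G : Type u) [Group G] : Prop :=
  ∃ X : Set G, IsSymmGen X ∧ ∃ δ : ℝ, 0 ≤ δ ∧
    ∀ x y z w : G,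
      gromovProd X x z w ≥ min (gromovProd X x y w) (gromovProd X y z w) - δ

/-- A subgroup is quasiconvex: it is finitely generated and word lengths distort linearly. -/
def IsQuasiconvex {G : Type u} [Group G] (A : Subgroup G) : Prop :=
  ∃ Y : Set ↥A, IsSymmGen Y ∧ ∃ X : Set G, IsSymmGen X ∧ ∃ c : ℝ, 0 < c ∧
    ∀ a : ↥A, (wordLength Y a : ℝ) ≤ c * (wordLength X (a : G) : ℝ) + c

/-- Property (Q): every finitely generated subgroup is quasiconvex. -/
def HasPropertyQ (G : Type u) [Group G] : Prop :=
  ∀ H : Subgroup G, H.FG → IsQuasiconvex H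

/-- A group is virtually cyclic if it has a cyclic subgroup of finite index. -/
def IsVirtuallyCyclic (C : Type u) [Group C] : Prop :=
  ∃ Z : Subgroup C, IsCyclic ↥Z ∧ Z.FiniteIndex

/-- `G` is the amalgamated free product of its subgroups `A` and `B` along `C`:
`C = A ⊓ B`, `A ⊔ B = ⊤` and `G` has the pushout universal property. -/
structure IsAmalgamatedFreeProduct {G : Type u} [Group G] (A B C : Subgroup G) : Prop where
  le_left : C ≤ A
  le_right : C ≤ B
  inf_eq : A ⊓ B = C
  sup_eq_top : A ⊔ B = ⊤
  univ : ∀ (K : Type u) [Group K] (f : ↥A →* K) (g : ↥B →* K),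
    (∀ (c : G) (hA : c ∈ A) (hB : c ∈ B), f ⟨c, hA⟩ = g ⟨c, hB⟩) →
    ∃ h : G →* K, (∀ a : ↥A, h a = f a) ∧ (∀ b : ↥B, h b = g b)

section Words

variable {G : Type u} [Group G]

/-- A word over the alphabet `X`. -/
def IsWordOver (X : Set G) (l : List G) : Prop := ∀ x ∈ l, x ∈ X

/-- A geodesic word over `X`. -/
def IsGeodesicWord (X : Set G) (l : List G) : Prop :=
  IsWordOver X l ∧ l.length = wordLength X l.prod

/-- A `lam`-quasigeodesic word over `X`: every subword `v` satisfies
`l(v) ≤ lam * l_X(v̄) + lam`. -/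
def IsQuasigeodesicWord (X : Set G) (lam : ℝ) (l : List G) : Prop :=
  IsWordOver X l ∧
    ∀ v : List G, v <:+: l → (v.length : ℝ) ≤ lam * (wordLength X v.prod : ℝ) + lam

/-- `g` is a shortest element of the subset `S` with respect to `wordLength X`. -/
def ShortestIn (X : Set G) (g : G) (S : Set G) : Prop :=
  g ∈ S ∧ ∀ s ∈ S, wordLength X g ≤ wordLength X s

end Words

/-- `G` together with `ια, ιβ` is the pushout of `ℤ → A, 1 ↦ x` and `ℤ → B, 1 ↦ y`. -/
structure IsAmalgamOverZ {A : Type u} {B : Type v} {G : Type w}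
    [Group A] [Group B] [Group G]
    (ια : A →* G) (ιβ : B →* G) (x : A) (y : B) : Prop where
  comm : ια x = ιβ y
  gen : ια.range ⊔ ιβ.range = ⊤
  univ : ∀ (K : Type (max u v w)) [Group K] (f : A →* K) (g : B →* K),
    f x = g y → ∃ h : G →* K, h.comp ια = f ∧ h.comp ιβ = g

/-! ### Word length relative to a subgroup -/

section WordLength

variable {G : Type u} [Group G] {X Y : Set G} {M N : Subgroup G} {g h : G}

theorem Set.Finite.exists_nat_bound {α : Type*} {s : Set α} (hs : s.Finite) (f : α → ℕ) :
    ∃ K, ∀ x ∈ s, f x ≤ K := by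
  obtain ⟨K, hK⟩ := (hs.image f).bddAbove
  exact ⟨K, fun x hx => hK ⟨x, hx, rfl⟩⟩

/-- `X` is a finite generating set of the subgroup `M`, closed under inversion. -/
structure IsSymmGenOf (X : Set G) (M : Subgroup G) : Prop where
  finite : X.Finite
  inv_mem : ∀ x ∈ X, x⁻¹ ∈ X
  closure_eq : Subgroup.closure X = M

theorem IsSymmGenOf.mem (hX : IsSymmGenOf X M) (hg : g ∈ X) : g ∈ M :=
  hX.closure_eq ▸ Subgroup.subset_closure hg

theorem IsSymmGenOf.prod_mem (hX : IsSymmGenOf X M) {l : List G} (hl : ∀ x ∈ l, x ∈ X) :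
    l.prod ∈ M :=
  M.list_prod_mem fun x hx => hX.mem (hl x hx)

theorem wordLength_prod_le {l : List G} (hl : ∀ x ∈ l, x ∈ X) :
    wordLength X l.prod ≤ l.length :=
  Nat.sInf_le ⟨l, rfl, hl, rfl⟩

theorem wordLength_one : wordLength X (1 : G) = 0 :=
  Nat.le_zero.1 (wordLength_prod_le (X := X) (l := []) (by simp))

theorem IsSymmGenOf.exists_list (hX : IsSymmGenOf X M) (hg : g ∈ M) :
    ∃ l : List G, l.length = wordLength X g ∧ (∀ x ∈ l, x ∈ X) ∧ l.prod = g := by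
  rw [← hX.closure_eq] at hg
  rw [← Subgroup.mem_toSubmonoid, Subgroup.closure_toSubmonoid,
    Set.union_eq_self_of_subset_right fun x hx => by simpa using hX.inv_mem _ hx] at hg
  obtain ⟨l, hl, rfl⟩ := Submonoid.exists_list_of_mem_closure hg
  exact Nat.sInf_mem (s := {n : ℕ | ∃ l' : List G, l'.length = n ∧ (∀ x ∈ l', x ∈ X) ∧
    l'.prod = l.prod}) ⟨_, l, rfl, hl, rfl⟩

theorem IsSymmGenOf.wordLength_mul_le (hX : IsSymmGenOf X M) (hg : g ∈ M) (hh : h ∈ M) :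
    wordLength X (g * h) ≤ wordLength X g + wordLength X h := by
  obtain ⟨l, hl, hlX, rfl⟩ := hX.exists_list hg
  obtain ⟨l', hl', hlX', rfl⟩ := hX.exists_list hh
  rw [← hl, ← hl', ← List.prod_append, ← List.length_append]
  refine wordLength_prod_le fun x hx => ?_
  rcases List.mem_append.1 hx with hx | hx
  exacts [hlX x hx, hlX' x hx]

theorem IsSymmGenOf.wordLength_inv_le (hX : IsSymmGenOf X M) (hg : g ∈ M) :
    wordLength X g⁻¹ ≤ wordLength X g := by
  obtain ⟨l, hl, hlX, rfl⟩ := hX.exists_list hg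
  rw [← hl, List.prod_inv_reverse]
  refine (wordLength_prod_le ?_).trans (by simp)
  intro x hx
  simp only [List.mem_reverse, List.mem_map] at hx
  obtain ⟨y, hy, rfl⟩ := hx
  exact hX.inv_mem y (hlX y hy)

theorem IsSymmGenOf.wordLength_inv (hX : IsSymmGenOf X M) (hg : g ∈ M) :
    wordLength X g⁻¹ = wordLength X g :=
  le_antisymm (hX.wordLength_inv_le hg) (by simpa using hX.wordLength_inv_le (M.inv_mem hg))

theorem wordLength_le_one (hg : g ∈ X) : wordLength X g ≤ 1 := by
  simpa using wordLength_prod_le (X := X) (l := [g]) (by simpa using hg)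

/-- A geodesic from `1` to `g`. -/
theorem IsSymmGenOf.exists_geodesic (hX : IsSymmGenOf X M) (hg : g ∈ M) :
    ∃ e : ℕ → G, e 0 = 1 ∧ e (wordLength X g) = g ∧ (∀ k, e k ∈ M) ∧
      (∀ k, wordLength X ((e k)⁻¹ * e (k + 1)) ≤ 1) ∧
      (∀ k, wordLength X (e k) + wordLength X ((e k)⁻¹ * g) = wordLength X g) ∧
      ∀ k ≤ wordLength X g, wordLength X (e k) = k := by
  obtain ⟨l, hl, hlX, rfl⟩ := hX.exists_list hg
  have h1 : ∀ k, ∀ x ∈ l.take k, x ∈ X := fun k x hx => hlX x (List.mem_of_mem_take hx)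
  have key : ∀ k, wordLength X (l.take k).prod + wordLength X ((l.take k).prod⁻¹ * l.prod) =
      wordLength X l.prod ∧ wordLength X (l.take k).prod = min k l.length := by
    intro k
    have h2 : ∀ x ∈ l.drop k, x ∈ X := fun x hx => hlX x (List.mem_of_mem_drop hx)
    have b1 := wordLength_prod_le (h1 k)
    have b2 := wordLength_prod_le h2
    have b3 := hX.wordLength_mul_le (hX.prod_mem (h1 k)) (hX.prod_mem h2)
    rw [List.prod_take_mul_prod_drop] at b3
    rw [List.length_take] at b1
    rw [List.length_drop] at b2
    rw [inv_mul_eq_of_eq_mul (List.prod_take_mul_prod_drop l k).symm]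
    omega
  refine ⟨fun k => (l.take k).prod, by simp, by simp [← hl], fun k => hX.prod_mem (h1 k),
    fun k => ?_, fun k => (key k).1, fun k hk => by
      rw [(key k).2]; exact min_eq_left (hk.trans hl.ge)⟩
  rcases lt_or_ge k l.length with hk | hk
  · beta_reduce
    rw [List.prod_take_succ _ _ hk, inv_mul_cancel_left]
    exact wordLength_le_one (hlX _ (List.getElem_mem hk))
  · simp [List.take_of_length_le hk, List.take_of_length_le (hk.trans (Nat.le_succ k)),
      wordLength_one]

/-- A point at prescribed distance along a geodesic from `1` to `g`. -/
theorem IsSymmGenOf.exists_split (hX : IsSymmGenOf X M) (hg : g ∈ M) {k : ℕ}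
    (hk : k ≤ wordLength X g) :
    ∃ e ∈ M, wordLength X e = k ∧ k + wordLength X (e⁻¹ * g) = wordLength X g := by
  obtain ⟨e, -, -, he, -, h1, h2⟩ := hX.exists_geodesic hg
  exact ⟨e k, he k, h2 k hk, by rw [← h1 k, h2 k hk]⟩

theorem IsSymmGenOf.exists_wordLength_map_le {G' : Type*} [Group G'] {Z : Set G'}
    {P : Subgroup G'} (hY : IsSymmGenOf Y N) (hZ : IsSymmGenOf Z P) (φ : G →* G')
    (h : ∀ g ∈ N, φ g ∈ P) :
    ∃ K, ∀ g ∈ N, wordLength Z (φ g) ≤ K * wordLength Y g := by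
  obtain ⟨K, hK⟩ := hY.finite.exists_nat_bound fun y => wordLength Z (φ y)
  refine ⟨K, fun g hg => ?_⟩
  obtain ⟨l, hl, hlY, rfl⟩ := hY.exists_list hg
  rw [← hl]
  clear hl hg
  induction l with
  | nil => simp [wordLength_one]
  | cons y l ih =>
    have hy : y ∈ Y := hlY y (by simp)
    have hl : ∀ x ∈ l, x ∈ Y := fun x hx => hlY x (by simp [hx])
    rw [List.prod_cons, map_mul, List.length_cons]
    have := hZ.wordLength_mul_le (h y (hY.mem hy)) (h _ (hY.prod_mem hl))
    have := ih hl
    have := hK y hy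
    rw [mul_add]
    omega

/-- The word length of a subgroup can be computed in the ambient group. -/
theorem wordLength_image_val {M : Subgroup G} (X : Set M) (g : M) :
    wordLength (Subtype.val '' X) (g : G) = wordLength X g := by
  unfold wordLength
  congr 1
  ext n
  constructor
  · rintro ⟨l, hl, hlX, hp⟩
    have : ∃ l' : List M, l'.map Subtype.val = l ∧ ∀ x ∈ l', x ∈ X := by
      clear hl hp
      induction l with
      | nil => exact ⟨[], by simp⟩
      | cons y l ih =>
        obtain ⟨l', rfl, h'⟩ := ih fun x hx => hlX x (by simp [hx])
        obtain ⟨y', hy', rfl⟩ := hlX y (by simp)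
        refine ⟨y' :: l', by simp, ?_⟩
        simpa using ⟨hy', fun a ha => h' _⟩
    obtain ⟨l', rfl, h'⟩ := this
    refine ⟨l', by simpa using hl, h', ?_⟩
    apply Subtype.val_injective
    rw [← hp]
    exact map_list_prod M.subtype l'
  · rintro ⟨l, rfl, hlX, rfl⟩
    refine ⟨l.map Subtype.val, by simp, ?_, (map_list_prod M.subtype l).symm⟩
    intro x hx
    obtain ⟨y, hy, rfl⟩ := List.mem_map.1 hx
    exact ⟨y, hlX y hy, rfl⟩

theorem IsSymmGen.isSymmGenOf_image_val {M : Subgroup G} {X : Set M} (hX : IsSymmGen X) :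
    IsSymmGenOf (Subtype.val '' X) M where
  finite := hX.1.image _
  inv_mem := by
    rintro _ ⟨x, hx, rfl⟩
    exact ⟨x⁻¹, hX.2.1 x hx, rfl⟩
  closure_eq := by
    have := M.subtype.map_closure X
    rw [hX.2.2, ← MonoidHom.range_eq_map, Subgroup.range_subtype] at this
    exact this.symm

theorem IsSymmGenOf.isSymmGen_preimage_val {M : Subgroup G} {X : Set G}
    (hX : IsSymmGenOf X M) :
    IsSymmGen (Subtype.val ⁻¹' X : Set M) ∧ Subtype.val '' (Subtype.val ⁻¹' X : Set M) = X := by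
  refine ⟨⟨hX.finite.preimage Subtype.val_injective.injOn, fun x hx => hX.inv_mem _ hx, ?_⟩, ?_⟩
  · have := Subgroup.closure_closure_coe_preimage (k := X)
    obtain rfl := hX.closure_eq
    exact this
  · rw [Set.image_preimage_eq_iff]
    exact fun x hx => ⟨⟨x, hX.mem hx⟩, rfl⟩

theorem Subgroup.FG.exists_isSymmGenOf (hM : M.FG) : ∃ X, IsSymmGenOf X M := by
  obtain ⟨S, rfl⟩ := hM
  refine ⟨S ∪ (S : Set G)⁻¹, S.finite_toSet.union S.finite_toSet.inv, ?_, ?_⟩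
  · rintro x (hx | hx)
    · exact Or.inr (by simpa using hx)
    · exact Or.inl hx
  · rw [Subgroup.closure_union, Subgroup.closure_inv, sup_idem]

end WordLength

/-! ### Reduced words in an amalgamated free product -/

section Reduced

variable {G : Type u} [Group G]

/-- The letters of `l` lie alternately in `A i` and `A (!i)`, starting with `A i`, and none of
them lies in `C`. -/
def IsReducedFrom (A : Bool → Subgroup G) (C : Subgroup G) : Bool → List G → Prop
  | _, [] => True
  | i, g :: l => g ∈ A i ∧ g ∉ C ∧ IsReducedFrom A C (!i) l

/-- `G` is generated by `A true` and `A false`, which meet in `C`, and nonempty reduced words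
represent nontrivial elements. -/
structure IsAmalgam (A : Bool → Subgroup G) (C : Subgroup G) : Prop where
  inf_eq : A true ⊓ A false = C
  sup_eq : A true ⊔ A false = ⊤
  prod_ne_one : ∀ i l, l ≠ [] → IsReducedFrom A C i l → l.prod ≠ 1

theorem IsReducedFrom.exists_sigma {A : Bool → Subgroup G} {C : Subgroup G} :
    ∀ {l : List G} {i : Bool}, IsReducedFrom A C i l →
      ∃ L : List (Σ b, A b), L.map (fun s => (s.2 : G)) = l ∧ (∀ s ∈ L, (s.2 : G) ∉ C) ∧
        L.IsChain (fun s t => s.1 ≠ t.1) ∧ ∀ s ∈ L.head?, s.1 = i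
  | [], _, _ => ⟨[], by simp⟩
  | g :: l, i, ⟨hg, hgC, hl⟩ => by
    obtain ⟨L, rfl, h1, h2, h3⟩ := hl.exists_sigma
    refine ⟨⟨i, g, hg⟩ :: L, by simp, ?_, ?_, by simp⟩
    · simpa [hgC] using h1
    · rw [List.isChain_cons]
      refine ⟨fun s hs => ?_, h2⟩
      simp [h3 s hs]

open Monoid in
theorem IsAmalgamatedFreeProduct.isAmalgam {A B C : Subgroup G}
    (h : IsAmalgamatedFreeProduct A B C) : IsAmalgam (fun b => cond b A B) C where
  inf_eq := h.inf_eq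
  sup_eq := h.sup_eq_top
  prod_ne_one := by
    intro i l hne hl hprod
    set F : Bool → Subgroup G := fun b => cond b A B with hF
    have hCF : ∀ b, C ≤ F b := by
      rintro (_ | _)
      exacts [h.le_right, h.le_left]
    let φ : ∀ b, C →* F b := fun b => Subgroup.inclusion (hCF b)
    obtain ⟨f, hfA, hfB⟩ := h.univ (PushoutI φ) (PushoutI.of (φ := φ) true)
      (PushoutI.of (φ := φ) false) (by
        intro c hA hB
        have hc : c ∈ C := h.inf_eq ▸ ⟨hA, hB⟩
        exact (PushoutI.of_apply_eq_base φ true ⟨c, hc⟩).trans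
          (PushoutI.of_apply_eq_base φ false ⟨c, hc⟩).symm)
    have hf : ∀ s : Σ b, F b, f s.2 = PushoutI.of (φ := φ) s.1 s.2 := by
      rintro ⟨_ | _, s⟩
      exacts [hfB s, hfA s]
    obtain ⟨L, rfl, h1, h2, -⟩ := hl.exists_sigma
    let w : CoprodI.Word (fun b => F b) :=
      ⟨L, fun s hs h' => h1 s hs (by rw [h']; exact C.one_mem), h2⟩
    have hw : PushoutI.Reduced φ w := by
      rintro s hs ⟨c, hc⟩
      exact h1 s hs (by rw [← hc]; exact c.2)
    have hwp : (PushoutI.ofCoprodI w.prod : PushoutI φ) = f (L.map fun s => (s.2 : G)).prod := by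
      simp only [CoprodI.Word.prod, map_list_prod, List.map_map, w]
      congr 1
      refine List.map_congr_left fun s _ => ?_
      simp [hf s]
    have := hw.eq_empty_of_mem_range (fun b => Subgroup.inclusion_injective (hCF b))
      ⟨1, by rw [hwp, hprod, map_one, map_one]⟩
    apply hne
    rw [show L = w.toList from rfl, this]
    rfl

variable {A : Bool → Subgroup G} {C : Subgroup G}

theorem IsAmalgam.le (h : IsAmalgam A C) (i : Bool) : C ≤ A i := by
  rw [← h.inf_eq]
  cases i
  exacts [inf_le_right, inf_le_left]

theorem IsAmalgam.mem_of_mem (h : IsAmalgam A C) {i : Bool} {g : G} (h1 : g ∈ A i)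
    (h2 : g ∈ A (!i)) : g ∈ C := by
  rw [← h.inf_eq]
  cases i
  exacts [⟨h2, h1⟩, ⟨h1, h2⟩]

theorem IsReducedFrom.exists_inv_mul :
    ∀ {l l' : List G} {i : Bool}, IsReducedFrom A C (!i) l → l' ≠ [] → IsReducedFrom A C i l' →
      ∃ j l'', l'' ≠ [] ∧ IsReducedFrom A C j l'' ∧ l''.prod = l.prod⁻¹ * l'.prod
  | [], l', i, _, hne, hl' => ⟨i, l', hne, hl', by simp⟩
  | g :: l, l', i, ⟨hg, hgC, hl⟩, _, hl' => by
    obtain ⟨j, l'', h1, h2, h3⟩ := hl.exists_inv_mul (l' := g⁻¹ :: l') (i := !i) (by simp)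
      ⟨inv_mem hg, by simpa using hgC, by simpa using hl'⟩
    exact ⟨j, l'', h1, h2, by simp [h3, mul_assoc]⟩

/-- Words not starting in `A i` which agree modulo `A i` agree modulo `C`. -/
theorem IsAmalgam.mem_of_prod_eq (h : IsAmalgam A C) {i : Bool} {l l' : List G} {a : G}
    (hl : IsReducedFrom A C (!i) l) (hl' : IsReducedFrom A C (!i) l') (ha : a ∈ A i)
    (heq : l.prod = a * l'.prod) : a ∈ C := by
  by_contra haC
  obtain ⟨j, l'', h1, h2, h3⟩ := IsReducedFrom.exists_inv_mul (l' := a :: l') (i := i) hl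
    (by simp) ⟨ha, haC, hl'⟩
  exact h.prod_ne_one j l'' h1 h2 (by simp [h3, heq])

/-- Reduced forms are unique modulo `C`. -/
theorem IsAmalgam.exists_suffix_eq (h : IsAmalgam A C) :
    ∀ {l l' : List G} {i i' : Bool} {c : G}, IsReducedFrom A C i l → IsReducedFrom A C i' l' →
      c ∈ C → l.prod = c * l'.prod →
      ∀ s, s <:+ l → ∃ s', s' <:+ l' ∧ ∃ c' ∈ C, s.prod = c' * s'.prod
  | [], l', _, _, c, _, _, hc, heq, s, hs => by
    obtain rfl := List.suffix_nil.1 hs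
    exact ⟨l', List.suffix_rfl, c, hc, heq⟩
  | b :: t, l', i, i', c, ⟨hb, hbC, ht⟩, hl', hc, heq, s, hs => by
    rcases List.suffix_cons_iff.1 hs with rfl | hs
    · exact ⟨l', List.suffix_rfl, c, hc, heq⟩
    by_cases hl'' : IsReducedFrom A C (!i) l'
    · refine absurd (h.mem_of_prod_eq (a := c⁻¹ * b) hl'' ht
        (mul_mem (inv_mem (h.le i hc)) hb) ?_) fun h' => hbC ?_
      · rw [List.prod_cons] at heq
        rw [mul_assoc, heq, inv_mul_cancel_left]
      · simpa using mul_mem hc h'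
    · obtain rfl : i' = i := by
        cases i <;> cases i' <;> simp_all
      match l', hl' with
      | [], _ => exact absurd trivial hl''
      | b' :: t', ⟨hb', hbC', ht'⟩ =>
        have heq' : t.prod = b⁻¹ * c * b' * t'.prod := by
          rw [List.prod_cons, List.prod_cons] at heq
          rw [eq_comm, mul_assoc, mul_assoc, ← heq, inv_mul_cancel_left]
        have hmem := h.mem_of_prod_eq ht ht'
          (mul_mem (mul_mem (inv_mem hb) (h.le _ hc)) hb') heq'
        obtain ⟨s', hs', hprod⟩ := h.exists_suffix_eq ht ht' hmem heq' s hs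
        exact ⟨s', hs'.trans (List.suffix_cons b' t'), hprod⟩

/-- The sum of the costs `f` of the letters of a word with alternating factors. -/
def alternatingCost (f : Bool → G → ℕ) : Bool → List G → ℕ
  | _, [] => 0
  | i, b :: l => f i b + alternatingCost f (!i) l

/-- Left multiplication of a reduced form by an element of a factor, keeping track of the
products of the suffixes and of the total cost of the letters. -/
theorem IsAmalgam.exists_reduced_mul (h : IsAmalgam A C) {i j : Bool} {l : List G} {c x : G}
    {f : Bool → G → ℕ} {K : ℕ} {S : Set G}
    (hl : IsReducedFrom A C i l) (hc : c ∈ C) (hx : x ∈ A j)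
    (hf : f j (x * c) ≤ K) (hf' : ∀ b ∈ A j, f j (x * c * b) ≤ f j b + K)
    (hS : ∀ s, s <:+ l → s.prod ∈ S) (hxS : x * (c * l.prod) ∈ S) :
    ∃ i' l', ∃ c' ∈ C, IsReducedFrom A C i' l' ∧ c' * l'.prod = x * (c * l.prod) ∧
      alternatingCost f i' l' ≤ alternatingCost f i l + K ∧ ∀ s, s <:+ l' → s.prod ∈ S := by
  have hy : x * c ∈ A j := mul_mem hx (h.le j hc)
  by_cases hyC : x * c ∈ C
  · exact ⟨i, l, x * c, hyC, hl, by group, by omega, hS⟩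
  by_cases hij : IsReducedFrom A C (!j) l
  · refine ⟨j, x * c :: l, 1, one_mem _, ⟨hy, hyC, hij⟩, by simp [mul_assoc], ?_, ?_⟩
    · have : alternatingCost f (!j) l = alternatingCost f i l := by
        cases l with
        | nil => rfl
        | cons b t =>
          obtain rfl : i = !j := by
            by_contra hne
            obtain rfl : i = j := by cases i <;> cases j <;> simp_all
            exact hl.2.1 (h.mem_of_mem hl.1 hij.1)
          rfl
      simp only [alternatingCost]
      omega
    · intro s hs
      rcases List.suffix_cons_iff.1 hs with rfl | hs
      · simpa [mul_assoc] using hxS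
      · exact hS s hs
  · obtain rfl : i = j := by
      cases i <;> cases j <;> simp_all
    match l, hl with
    | [], _ => exact absurd trivial hij
    | b :: t, ⟨hb, hbC, ht⟩ =>
      have hSt : ∀ s, s <:+ t → s.prod ∈ S := fun s hs => hS s (hs.trans (List.suffix_cons b t))
      by_cases hyb : x * c * b ∈ C
      · refine ⟨!i, t, x * c * b, hyb, ht, by simp [mul_assoc], ?_, hSt⟩
        simp only [alternatingCost]
        omega
      · refine ⟨i, x * c * b :: t, 1, one_mem _, ⟨mul_mem hy hb, hyb, ht⟩,
          by simp [mul_assoc], ?_, ?_⟩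
        · have := hf' b hb
          simp only [alternatingCost]
          omega
        · intro s hs
          rcases List.suffix_cons_iff.1 hs with rfl | hs
          · simpa [mul_assoc] using hxS
          · exact hSt s hs

theorem IsAmalgam.exists_reduced_prod (h : IsAmalgam A C) {f : Bool → G → ℕ} {K : ℕ}
    {S : Set G} :
    ∀ {w : List G}, (∀ x ∈ w, ∃ j, x ∈ A j ∧ ∀ c ∈ C, f j (x * c) ≤ K ∧
        ∀ b ∈ A j, f j (x * c * b) ≤ f j b + K) →
      (∀ s, s <:+ w → s.prod ∈ S) →
      ∃ i l, ∃ c ∈ C, IsReducedFrom A C i l ∧ c * l.prod = w.prod ∧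
        alternatingCost f i l ≤ K * w.length ∧ ∀ s, s <:+ l → s.prod ∈ S
  | [], _, hS => ⟨true, [], 1, one_mem _, trivial, by simp, Nat.zero_le _, hS⟩
  | x :: w, hw, hS => by
    obtain ⟨i, l, c, hc, hl, heq, hcost, hSl⟩ := h.exists_reduced_prod (w := w)
      (fun y hy => hw y (by simp [hy])) fun s hs => hS s (hs.trans (List.suffix_cons x w))
    obtain ⟨j, hxj, hj⟩ := hw x (by simp)
    obtain ⟨i', l', c', hc', hl', heq', hcost', hSl'⟩ := h.exists_reduced_mul hl hc hxj
      (hj c hc).1 (hj c hc).2 hSl (by rw [heq]; exact hS (x :: w) List.suffix_rfl)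
    refine ⟨i', l', c', hc', hl', by rw [heq', heq, List.prod_cons], ?_, hSl'⟩
    rw [List.length_cons, mul_add]
    omega

theorem IsAmalgam.exists_list_prod_eq (h : IsAmalgam A C) (g : G) :
    ∃ w : List G, (∀ x ∈ w, ∃ j, x ∈ A j) ∧ w.prod = g := by
  have hg : g ∈ Subgroup.closure ((A true : Set G) ∪ A false) := by
    rw [Subgroup.closure_union, Subgroup.closure_eq, Subgroup.closure_eq, h.sup_eq]
    trivial
  rw [← Subgroup.mem_toSubmonoid, Subgroup.closure_toSubmonoid] at hg
  obtain ⟨l, hl, rfl⟩ := Submonoid.exists_list_of_mem_closure hg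
  refine ⟨l, fun x hx => ?_, rfl⟩
  have := hl x hx
  simp only [Set.union_inv, inv_coe_set, Set.union_self, Set.mem_union, SetLike.mem_coe] at this
  exact this.elim (fun h => ⟨true, h⟩) fun h => ⟨false, h⟩

theorem IsAmalgam.exists_reduced (h : IsAmalgam A C) (g : G) :
    ∃ i l, ∃ c ∈ C, IsReducedFrom A C i l ∧ c * l.prod = g := by
  obtain ⟨w, hw, rfl⟩ := h.exists_list_prod_eq g
  obtain ⟨i, l, c, hc, hl, heq, -⟩ := h.exists_reduced_prod (f := 0) (K := 0) (S := Set.univ)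
    (w := w) (fun x hx => (hw x hx).imp fun j hj => ⟨hj, by simp⟩) (by simp)
  exact ⟨i, l, c, hc, hl, heq⟩

theorem IsAmalgam.exists_eq_mul_prod (h : IsAmalgam A C) (i : Bool) (g : G) :
    ∃ a ∈ A i, ∃ l, IsReducedFrom A C (!i) l ∧ g = a * l.prod := by
  obtain ⟨j, l, c, hc, hl, rfl⟩ := h.exists_reduced g
  by_cases hl' : IsReducedFrom A C (!i) l
  · exact ⟨c, h.le i hc, l, hl', rfl⟩
  · obtain rfl : j = i := by
      cases i <;> cases j <;> simp_all
    match l, hl with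
    | [], _ => exact absurd trivial hl'
    | b :: t, ⟨hb, _, ht⟩ => exact ⟨c * b, mul_mem (h.le _ hc) hb, t, ht, by simp [mul_assoc]⟩

end Reduced

/-! ### Projections onto the factors -/

section Projection

variable {G : Type u} [Group G] {A : Bool → Subgroup G} {C : Subgroup G}

/-- A left `A i`-equivariant map `G → A i` reading off the first letter in `A i` of a reduced
form. -/
structure IsProjection (A : Bool → Subgroup G) (C : Subgroup G) (i : Bool) (r : G → G) :
    Prop where
  mem : ∀ g, r g ∈ A i
  mul_left : ∀ a ∈ A i, ∀ g, r (a * g) = a * r g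
  exists_eq : ∀ g, ∃ l, IsReducedFrom A C (!i) l ∧ g = r g * l.prod

theorem IsAmalgam.exists_isProjection (h : IsAmalgam A C) (i : Bool) :
    ∃ r, IsProjection A C i r := by
  choose a ha l hl hal using h.exists_eq_mul_prod i
  let q : G → G := fun g => (Quotient.mk (QuotientGroup.rightRel (A i)) g).out
  have hq : ∀ g, g * (q g)⁻¹ ∈ A i := fun g =>
    QuotientGroup.rightRel_apply.1 (Quotient.mk_out (s := QuotientGroup.rightRel (A i)) g)
  have hq' : ∀ b ∈ A i, ∀ g, q (b * g) = q g := by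
    intro b hb g
    have : Quotient.mk (QuotientGroup.rightRel (A i)) (b * g) = Quotient.mk _ g :=
      Quotient.sound (QuotientGroup.rightRel_apply.2 (by simpa using hb))
    simp only [q, this]
  refine ⟨fun g => g * (l (q g)).prod⁻¹, fun g => ?_, fun b hb g => ?_,
    fun g => ⟨l (q g), hl _, by simp⟩⟩
  · have : g * (l (q g)).prod⁻¹ = g * (q g)⁻¹ * a (q g) := by
      rw [mul_assoc, mul_right_inj, eq_inv_mul_iff_mul_eq, mul_inv_eq_iff_eq_mul]
      exact hal _
    rw [this]
    exact mul_mem (hq g) (ha _)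
  · simp only [hq' b hb g, mul_assoc]

variable {i : Bool} {r : G → G}

theorem IsProjection.mem_of_isReducedFrom (hr : IsProjection A C i r) (h : IsAmalgam A C)
    {l : List G} (hl : IsReducedFrom A C (!i) l) : r l.prod ∈ C := by
  obtain ⟨l', hl', heq⟩ := hr.exists_eq l.prod
  exact h.mem_of_prod_eq hl hl' (hr.mem _) heq

theorem IsProjection.one_mem (hr : IsProjection A C i r) (h : IsAmalgam A C) : r 1 ∈ C :=
  hr.mem_of_isReducedFrom h (l := []) trivial

theorem IsProjection.inv_mul_mem (hr : IsProjection A C i r) (h : IsAmalgam A C) {g : G}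
    (hg : g ∈ A i) : g⁻¹ * r g ∈ C := by
  have := hr.mul_left g hg 1
  rw [mul_one] at this
  rw [this, inv_mul_cancel_left]
  exact hr.one_mem h

/-- Right multiplication of a nonempty reduced word by an element of a factor. -/
theorem IsAmalgam.exists_prod_mul (h : IsAmalgam A C) {j : Bool} {x : G} (hx : x ∈ A j) :
    ∀ {l : List G} {k : Bool}, l ≠ [] → IsReducedFrom A C k l →
      ∃ l', ∃ c ∈ C, IsReducedFrom A C k l' ∧ l.prod * x = c * l'.prod
  | [], _, hne, _ => absurd rfl hne
  | [b], k, _, ⟨hb, hbC, _⟩ => by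
    by_cases hxk : x ∈ A k
    · by_cases hbx : b * x ∈ C
      · exact ⟨[], b * x, hbx, trivial, by simp⟩
      · exact ⟨[b * x], 1, one_mem _, ⟨mul_mem hb hxk, hbx, trivial⟩, by simp⟩
    · obtain rfl : j = !k := by cases j <;> cases k <;> simp_all
      exact ⟨[b, x], 1, one_mem _, ⟨hb, hbC, hx, fun hxC => hxk (h.le _ hxC), trivial⟩, by simp⟩
  | b :: b' :: t, k, _, ⟨hb, hbC, ht⟩ => by
    obtain ⟨l', c, hc, hl', heq⟩ := h.exists_prod_mul hx (l := b' :: t) (by simp) ht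
    refine ⟨b * c :: l', 1, one_mem _, ⟨mul_mem hb (h.le _ hc), fun h' => hbC ?_, hl'⟩, ?_⟩
    · simpa using mul_mem h' (inv_mem hc)
    · rw [List.prod_cons, mul_assoc, heq, List.prod_cons, one_mul, mul_assoc]

/-- The projection changes only while the path moves inside `A i`. -/
theorem IsProjection.inv_mul_mul_mem (hr : IsProjection A C i r) (h : IsAmalgam A C) {j : Bool}
    {g x : G} (hx : x ∈ A j) (hgx : g ∉ A i ∨ x ∉ A i) : (r g)⁻¹ * r (g * x) ∈ C := by
  obtain ⟨l, hl, heq⟩ := hr.exists_eq g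
  obtain ⟨l', hl', heq'⟩ := hr.exists_eq (g * x)
  have key : l.prod * x = (r g)⁻¹ * r (g * x) * l'.prod := by
    rw [mul_assoc, ← heq', eq_inv_mul_iff_mul_eq, ← mul_assoc, ← heq]
  have hmem : (r g)⁻¹ * r (g * x) ∈ A i := mul_mem (inv_mem (hr.mem _)) (hr.mem _)
  rcases eq_or_ne l [] with rfl | hne
  · have hgA : g ∈ A i := by rw [heq]; simpa using hr.mem g
    have hxA : x ∉ A i := hgx.resolve_left (not_not.2 hgA)
    obtain rfl : j = !i := Bool.eq_not.2 fun hji => hxA (hji ▸ hx)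
    exact h.mem_of_prod_eq (l := [x]) ⟨hx, fun hxC => hxA (h.le i hxC), trivial⟩ hl' hmem
      (by simpa using key)
  · obtain ⟨l'', c, hc, hl'', heq''⟩ := h.exists_prod_mul hx hne hl
    have := h.mem_of_prod_eq (a := c⁻¹ * ((r g)⁻¹ * r (g * x))) hl'' hl'
      (mul_mem (inv_mem (h.le i hc)) hmem)
      (by rw [mul_assoc, ← key, heq'', inv_mul_cancel_left])
    simpa using mul_mem hc this

end Projection

/-! ### A criterion for hyperbolicity by guessing geodesics -/

section Guessing

variable {V : Type*}

/-- A pseudometric with values in `ℕ` in which any two points are joined by a geodesic. -/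
structure IsGeodesicDist (d : V → V → ℕ) : Prop where
  self : ∀ x, d x x = 0
  symm : ∀ x y, d x y = d y x
  triangle : ∀ x y z, d x z ≤ d x y + d y z
  exists_between : ∀ x y k, k ≤ d x y → ∃ z, d x z = k ∧ k + d z y = d x y

/-- The sets `L x y` behave like uniform neighbourhoods of geodesics in a hyperbolic space:
they form thin triangles with coarse centres. -/
structure IsThinFamily (d : V → V → ℕ) (L : V → V → Set V) (h : ℕ) : Prop where
  near : ∀ x y, d x y ≤ 1 → ∀ p ∈ L x y, d x p ≤ h
  thin : ∀ x y z, ∀ p ∈ L x z, ∃ q, (q ∈ L x y ∨ q ∈ L y z) ∧ d p q ≤ h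
  center : ∀ x y z, ∃ p ∈ L x z, ∃ q ∈ L x y, ∃ q' ∈ L y z, d p q ≤ h ∧ d p q' ≤ h

theorem exists_linear_le_two_pow (h : ℕ) :
    ∃ k₀, ∀ k ≥ k₀, 4 * (h * (k + 4)) + 4 * h + 2 ≤ 2 ^ k := by
  refine ⟨2 * (20 * h + 2), fun k hk => ?_⟩
  induction k, hk using Nat.le_induction with
  | base =>
    have h1 : 20 * h + 2 < 2 ^ (20 * h + 2) := Nat.lt_two_pow_self
    have h2 : (20 * h + 3) * (20 * h + 3) ≤ 2 ^ (2 * (20 * h + 2)) := by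
      rw [two_mul, pow_add]
      exact Nat.mul_le_mul h1 h1
    nlinarith
  | succ k hk ih =>
    have : 2 ^ (k + 1) = 2 ^ k + 2 ^ k := by ring
    nlinarith

variable {d : V → V → ℕ} {L : V → V → Set V} {h : ℕ}

theorem IsThinFamily.exists_near_of_le_two_pow (hd : IsGeodesicDist d) (hL : IsThinFamily d L h)
    (k : ℕ) : ∀ x y, d x y ≤ 2 ^ k → ∀ p ∈ L x y,
      ∃ q, d x q + d q y = d x y ∧ d p q ≤ h * (k + 1) := by
  induction k with
  | zero =>
    intro x y hxy p hp
    have := hL.near x y (by simpa using hxy) p hp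
    exact ⟨x, by simp [hd.self], by rw [hd.symm]; simpa using this⟩
  | succ k ih =>
    intro x y hxy p hp
    obtain ⟨m, hm1, hm2⟩ := hd.exists_between x y (min (2 ^ k) (d x y)) (min_le_right _ _)
    have h2 : 2 ^ (k + 1) = 2 ^ k + 2 ^ k := by ring
    have h3 : h * (k + 1 + 1) = h * (k + 1) + h := by ring
    obtain ⟨p', hp', hpp'⟩ := hL.thin x m y p hp
    rcases hp' with hp' | hp'
    · obtain ⟨q, hq, hpq⟩ := ih x m (by omega) p' hp'
      have := hd.triangle p p' q
      have := hd.triangle q m y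
      have := hd.triangle x q y
      exact ⟨q, by omega, by omega⟩
    · obtain ⟨q, hq, hpq⟩ := ih m y (by omega) p' hp'
      have := hd.triangle p p' q
      have := hd.triangle x m q
      have := hd.triangle x q y
      exact ⟨q, by omega, by omega⟩

theorem IsThinFamily.exists_near_improve (hd : IsGeodesicDist d) (hL : IsThinFamily d L h)
    {n D k : ℕ} (hD : ∀ x y, d x y ≤ n → ∀ p ∈ L x y, ∃ q, d x q + d q y = d x y ∧ d p q ≤ D)
    (hk : 4 * D + 4 * h + 2 ≤ 2 ^ k) :
    ∀ x y, d x y ≤ n → ∀ p ∈ L x y, ∃ q, d x q + d q y = d x y ∧ d p q ≤ h * (k + 3) := by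
  intro x y hxy p hp
  have hk3 : h * (k + 3) = h * (k + 1) + h + h := by ring
  have hk1 : h ≤ h * (k + 1) := Nat.le_mul_of_pos_right h (Nat.succ_pos k)
  obtain ⟨q, hq, hpq⟩ := hD x y hxy p hp
  obtain ⟨x', hx1, hx2⟩ := hd.exists_between q x (min (2 * D + 2 * h + 1) (d q x))
    (min_le_right _ _)
  obtain ⟨y', hy1, hy2⟩ := hd.exists_between q y (min (2 * D + 2 * h + 1) (d q y))
    (min_le_right _ _)
  have s1 := hd.symm x x'
  have s2 := hd.symm x q
  have s3 := hd.symm x' q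
  have t1 := hd.triangle x x' y
  have t2 := hd.triangle x' y' y
  have t3 := hd.triangle x' q y'
  obtain ⟨p₁, hp₁ | hp₁, hpp₁⟩ := hL.thin x x' y p hp
  · by_cases hxx : d x x' = 0
    · have := hL.near x x' (by omega) p₁ hp₁
      have := hd.triangle p p₁ x
      have := hd.symm x p₁
      exact ⟨x, by simp [hd.self], by omega⟩
    · obtain ⟨z, hz, hpz⟩ := hD x x' (by omega) p₁ hp₁
      have := hd.triangle q p z
      have := hd.triangle p p₁ z
      have := hd.symm q p
      have := hd.triangle x z q
      have := hd.symm z q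
      omega
  obtain ⟨p₂, hp₂ | hp₂, hpp₂⟩ := hL.thin x' y' y p₁ hp₁
  · obtain ⟨z, hz, hpz⟩ := hL.exists_near_of_le_two_pow hd k x' y' (by omega) p₂ hp₂
    have := hd.triangle p p₁ z
    have := hd.triangle p₁ p₂ z
    have := hd.triangle x x' z
    have := hd.triangle z y' y
    have := hd.triangle x z y
    exact ⟨z, by omega, by omega⟩
  · by_cases hyy : d y' y = 0
    · have := hL.near y' y (by omega) p₂ hp₂
      have := hd.triangle p p₁ y
      have := hd.triangle p₁ p₂ y
      have := hd.triangle p₂ y' y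
      have := hd.symm y' p₂
      exact ⟨y, by simp [hd.self], by omega⟩
    · have := hd.symm q y
      obtain ⟨z, hz, hpz⟩ := hD y' y (by omega) p₂ hp₂
      have := hd.triangle q p z
      have := hd.triangle p p₁ z
      have := hd.triangle p₁ p₂ z
      have := hd.symm q p
      have := hd.triangle q z y
      omega

theorem IsThinFamily.exists_near (hd : IsGeodesicDist d) (hL : IsThinFamily d L h) :
    ∃ D, ∀ x y, ∀ p ∈ L x y, ∃ q, d x q + d q y = d x y ∧ d p q ≤ D := by
  obtain ⟨k₀, hk₀⟩ := exists_linear_le_two_pow h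
  have key : ∀ n j, (∀ x y, d x y ≤ n → ∀ p ∈ L x y,
      ∃ q, d x q + d q y = d x y ∧ d p q ≤ h * (k₀ + j + 3)) →
      ∀ x y, d x y ≤ n → ∀ p ∈ L x y, ∃ q, d x q + d q y = d x y ∧ d p q ≤ h * (k₀ + 3) := by
    intro n j
    induction j with
    | zero => exact id
    | succ j ih =>
      exact fun H => ih (hL.exists_near_improve hd H (hk₀ (k₀ + j) (Nat.le_add_right _ _)))
  refine ⟨h * (k₀ + 3), fun x y => key (d x y) (d x y) (fun x' y' hxy p hp => ?_) x y le_rfl⟩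
  obtain ⟨q, hq, hpq⟩ := hL.exists_near_of_le_two_pow hd (d x y) x' y'
    (hxy.trans Nat.lt_two_pow_self.le) p hp
  exact ⟨q, hq, hpq.trans (Nat.mul_le_mul_left h (by omega))⟩

/-- A geodesic space with a thin family is hyperbolic. -/
theorem IsThinFamily.exists_four_point (hd : IsGeodesicDist d) (hL : IsThinFamily d L h) :
    ∃ D, ∀ x y z w, d x z + d y w ≤ max (d x y + d z w) (d y z + d x w) + D := by
  obtain ⟨D, hD⟩ := hL.exists_near hd
  refine ⟨6 * D + 8 * h, fun x y z w => ?_⟩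
  have hL' : ∀ x y, ∀ p ∈ L x y, d x p + d p y ≤ d x y + 2 * D := by
    intro x y p hp
    obtain ⟨q, hq, hpq⟩ := hD x y p hp
    have := hd.triangle x q p
    have := hd.triangle p q y
    have := hd.symm p q
    omega
  obtain ⟨p, hp, q, hq, q', hq', h1, h2⟩ := hL.center x w z
  have b1 := hL' x w q hq
  have b2 := hL' w z q' hq'
  have t1 := hd.triangle x q p
  have t2 := hd.triangle p q w
  have t3 := hd.triangle w q' p
  have t4 := hd.triangle p q' z
  have s1 := hd.symm p q
  have s2 := hd.symm p q'
  have s3 := hd.symm p w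
  have s4 := hd.symm z w
  have t5 := hd.triangle x p z
  obtain ⟨p', hp', hpp'⟩ := hL.thin x y z p hp
  have t6 := hd.triangle p' p w
  have s5 := hd.symm p p'
  have t7 := hd.triangle y p' w
  rcases hp' with hp' | hp'
  · have := hL' x y p' hp'
    have := hd.triangle x p' w
    have := hd.symm p' y
    omega
  · have := hL' y z p' hp'
    have := hd.triangle w p' z
    have := hd.symm p' w
    omega

end Guessing

/-! ### Finitely generated subgroups of amalgams -/

theorem exists_mem_of_mem_union {α : Type*} {X : Bool → Set α} {x : α}
    (hx : x ∈ X true ∪ X false) : ∃ j, x ∈ X j :=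
  hx.elim (fun h => ⟨true, h⟩) fun h => ⟨false, h⟩

section PropertyQ

variable {G : Type u} [Group G] {A : Bool → Subgroup G} {C : Subgroup G}

theorem HasPropertyQ.exists_wordLength_le {A M : Subgroup G} {X : Set G} (hQ : HasPropertyQ A)
    (hX : IsSymmGenOf X A) (hMA : M ≤ A) (hM : M.FG) :
    ∃ W, IsSymmGenOf W M ∧ ∃ K : ℕ, ∀ m ∈ M, wordLength W m ≤ K * (wordLength X m + 1) := by
  have hfg : (M.subgroupOf A).FG := by
    rw [← Group.fg_iff_subgroup_fg] at hM ⊢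
    exact Group.fg_of_surjective (f := (Subgroup.subgroupOfEquivOfLe hMA).symm.toMonoidHom)
      (Subgroup.subgroupOfEquivOfLe hMA).symm.surjective
  obtain ⟨Y, hY, X', hX', c, -, hc⟩ := hQ _ hfg
  have hY' := hY.isSymmGenOf_image_val
  obtain ⟨K, hK⟩ := hX.exists_wordLength_map_le hX'.isSymmGenOf_image_val (MonoidHom.id G)
    fun g hg => hg
  refine ⟨Subtype.val '' (Subtype.val '' Y), ⟨hY'.finite.image _, ?_, ?_⟩,
    ⌈c⌉₊ * (K + 1), fun m hm => ?_⟩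
  · rintro _ ⟨x, hx, rfl⟩
    exact ⟨x⁻¹, hY'.inv_mem x hx, rfl⟩
  · have := A.subtype.map_closure (Subtype.val '' Y)
    rw [hY'.closure_eq, Subgroup.subgroupOf_map_subtype, inf_eq_left.2 hMA] at this
    exact this.symm
  · have h1 := wordLength_image_val (Subtype.val '' Y) ⟨m, hMA hm⟩
    have h2 := wordLength_image_val Y ⟨⟨m, hMA hm⟩, hm⟩
    have h3 := wordLength_image_val X' ⟨m, hMA hm⟩
    have h4 := hK m (hMA hm)
    have h5 := hc ⟨⟨m, hMA hm⟩, hm⟩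
    simp only [MonoidHom.id_apply] at h1 h2 h3 h4
    rw [h1, h2]
    rw [h3] at h4
    have h6 : wordLength Y ⟨⟨m, hMA hm⟩, hm⟩ ≤
        ⌈c⌉₊ * wordLength X' ⟨m, hMA hm⟩ + ⌈c⌉₊ := by
      have := Nat.le_ceil c
      have h7 : (wordLength Y ⟨⟨m, hMA hm⟩, hm⟩ : ℝ) ≤
          ⌈c⌉₊ * wordLength X' ⟨m, hMA hm⟩ + ⌈c⌉₊ := by
        refine h5.trans ?_
        gcongr
      exact_mod_cast h7
    refine h6.trans ?_
    rw [← mul_add_one, mul_assoc]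
    exact Nat.mul_le_mul_left _ (by nlinarith)

/-- Elements of a finitely generated subgroup are represented by words over `Z` whose prefixes
stay uniformly close to the subgroup. -/
theorem IsSymmGenOf.exists_finite_prefix {Y Z : Set G} {H : Subgroup G} (hY : IsSymmGenOf Y H)
    (hZ : IsSymmGenOf Z ⊤) :
    ∃ D : Set G, D.Finite ∧ 1 ∈ D ∧ ∀ h ∈ H, ∃ w : List G, (∀ x ∈ w, x ∈ Z) ∧ w.prod = h ∧
      ∀ p, p <+: w → ∃ k ∈ H, ∃ e ∈ D, p.prod = k * e := by
  choose w _ hwZ hwp using fun g : G => hZ.exists_list (g := g) trivial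
  refine ⟨insert 1 (⋃ y ∈ Y, List.prod '' {p | p ∈ (w y).inits}),
    (hY.finite.biUnion fun y _ => ((w y).inits.finite_toSet.image _)).insert 1,
    Set.mem_insert _ _, fun h hh => ?_⟩
  obtain ⟨l, -, hl, rfl⟩ := hY.exists_list hh
  clear hh
  induction l with
  | nil =>
    refine ⟨[], by simp, rfl, fun p hp => ⟨1, H.one_mem, 1, Set.mem_insert _ _, ?_⟩⟩
    simp [List.prefix_nil.1 hp]
  | cons y l ih =>
    obtain ⟨v, hvZ, hvp, hv⟩ := ih fun x hx => hl x (by simp [hx])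
    have hy : y ∈ Y := hl y (by simp)
    refine ⟨w y ++ v, ?_, by simp [hwp, hvp], ?_⟩
    · intro x hx
      rcases List.mem_append.1 hx with hx | hx
      exacts [hwZ y x hx, hvZ x hx]
    · intro p hp
      rcases List.prefix_or_prefix_of_prefix hp (List.prefix_append (w y) v) with hp | ⟨p', rfl⟩
      · refine ⟨1, H.one_mem, p.prod, Or.inr ?_, (one_mul _).symm⟩
        exact Set.mem_biUnion hy ⟨p, by simpa using hp, rfl⟩
      · obtain ⟨k, hk, e, he, hke⟩ := hv p' ((List.prefix_append_right_inj _).1 hp)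
        exact ⟨y * k, mul_mem (hY.mem hy) hk, e, he, by simp [hwp, hke, mul_assoc]⟩

theorem IsAmalgam.isSymmGenOf_union (h : IsAmalgam A C) {X : Bool → Set G}
    (hX : ∀ i, IsSymmGenOf (X i) (A i)) : IsSymmGenOf (X true ∪ X false) ⊤ where
  finite := (hX true).finite.union (hX false).finite
  inv_mem := by
    rintro x (hx | hx)
    exacts [Or.inl ((hX true).inv_mem x hx), Or.inr ((hX false).inv_mem x hx)]
  closure_eq := by
    rw [Subgroup.closure_union, (hX true).closure_eq, (hX false).closure_eq, h.sup_eq]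

/-- A finitely generated subgroup of an amalgam over a finite subgroup meets the factors in
finitely generated subgroups. -/
theorem IsAmalgam.fg_inf (h : IsAmalgam A C) (hC : (C : Set G).Finite) {X : Bool → Set G}
    (hX : ∀ i, IsSymmGenOf (X i) (A i)) {H : Subgroup G} (hH : H.FG) (i : Bool) :
    (H ⊓ A i).FG := by
  obtain ⟨r, hr⟩ := h.exists_isProjection i
  obtain ⟨Y, hY⟩ := hH.exists_isSymmGenOf
  have hZ := h.isSymmGenOf_union hX
  set Z := X true ∪ X false with hZdef
  obtain ⟨D, hD, hD1, hDw⟩ := hY.exists_finite_prefix hZ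
  have hat : ∀ e : G, ∃ e', ∀ k ∈ H, k * e ∈ A i → k * e * e'⁻¹ ∈ H ⊓ A i := by
    intro e
    by_cases hk : ∃ k₀ ∈ H, k₀ * e ∈ A i
    · obtain ⟨k₀, hk₀, hk₀A⟩ := hk
      refine ⟨k₀ * e, fun k hk hkA =>
        Subgroup.mem_inf.2 ⟨?_, (A i).mul_mem hkA ((A i).inv_mem hk₀A)⟩⟩
      have : k * e * (k₀ * e)⁻¹ = k * k₀⁻¹ := by group
      rw [this]
      exact H.mul_mem hk (H.inv_mem hk₀)
    · exact ⟨1, fun k hkH hkA => absurd ⟨k, hkH, hkA⟩ hk⟩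
  choose f hf using hat
  set T : Set G := insert 1 (f '' Set.image2 (· * ·) D C) with hT
  have hTfin : T.Finite := ((hD.image2 _ hC).image f).insert 1
  have hTf : ∀ e ∈ D, ∀ c ∈ C, f (e * c) ∈ T := fun e he c hc =>
    Or.inr ⟨_, ⟨e, he, c, hc, rfl⟩, rfl⟩
  set B : Set G := (C : Set G) ∪ Set.image2 (· * ·) (Set.image2 (· * ·) C Z) C with hB
  have hBfin : B.Finite := hC.union ((hC.image2 _ hZ.finite).image2 _ hC)
  set E : Set G := {g | g ∈ H ⊓ A i ∧ ∃ e ∈ T, ∃ b ∈ B, ∃ e' ∈ T, g = e * b * e'⁻¹} with hE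
  have hEfin : E.Finite := by
    refine ((hTfin.image2 (· * ·) hBfin).image2 (fun x y => x * y⁻¹) hTfin).subset ?_
    rintro g ⟨-, e, he, b, hb, e', he', rfl⟩
    exact ⟨_, ⟨e, he, b, hb, rfl⟩, e', he', rfl⟩
  have key : ∀ w : List G, (∀ x ∈ w, x ∈ Z) →
      (∀ p, p <+: w → ∃ k ∈ H, ∃ e ∈ D, p.prod = k * e) →
      (∃ e ∈ T, r w.prod * e⁻¹ ∈ Subgroup.closure E) ∧
        ∃ k ∈ H, ∃ e ∈ D, ∃ c ∈ C, r w.prod = k * (e * c) := by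
    intro w
    induction w using List.reverseRecOn with
    | nil =>
      intro _ _
      rw [List.prod_nil]
      have hr1 := hr.one_mem h
      refine ⟨⟨f (1 * r 1), hTf 1 hD1 _ hr1, Subgroup.subset_closure
        ⟨?_, 1, Set.mem_insert _ _, r 1, Or.inl hr1, _, hTf 1 hD1 _ hr1, by simp⟩⟩,
        1, H.one_mem, 1, hD1, r 1, hr1, by simp⟩
      simpa using hf (1 * r 1) 1 H.one_mem (by simpa using hr.mem 1)
    | append_singleton w x ih =>
      intro hwZ hp
      obtain ⟨⟨e, he, hre⟩, k, hk, e₁, he₁, c₁, hc₁, hrk⟩ := ih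
        (fun y hy => hwZ y (by simp [hy])) fun p hpw => hp p (hpw.trans (List.prefix_append _ _))
      have hx : x ∈ Z := hwZ x (by simp)
      obtain ⟨j, hxj⟩ := exists_mem_of_mem_union hx
      have hxA : x ∈ A j := (hX j).mem hxj
      have hprod : (w ++ [x]).prod = w.prod * x := by simp
      rw [hprod]
      set g := w.prod with hg
      have hmain : (r g)⁻¹ * r (g * x) ∈ B ∧
          ∃ k ∈ H, ∃ e ∈ D, ∃ c ∈ C, r (g * x) = k * (e * c) := by
        by_cases hgx : g ∈ A i ∧ x ∈ A i
        · have h1 := hr.inv_mul_mem h hgx.1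
          have h2 := hr.inv_mul_mem h (mul_mem hgx.1 hgx.2)
          constructor
          · refine Or.inr ⟨_, ⟨_, inv_mem h1, x, hx, rfl⟩, _, h2, ?_⟩
            simp only
            group
          · obtain ⟨k', hk', e', he', hke⟩ := hp (w ++ [x]) List.prefix_rfl
            refine ⟨k', hk', e', he', _, h2, ?_⟩
            rw [← mul_assoc, ← hke, hprod, mul_inv_cancel_left]
        · have h1 := hr.inv_mul_mul_mem h hxA (not_and_or.1 hgx)
          refine ⟨Or.inl h1, k, hk, e₁, he₁, _, mul_mem hc₁ h1, ?_⟩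
          rw [← mul_assoc, ← mul_assoc, mul_assoc k, ← hrk, mul_inv_cancel_left]
      obtain ⟨hb, k', hk', e', he', c', hc', hrk'⟩ := hmain
      refine ⟨⟨f (e' * c'), hTf e' he' c' hc', ?_⟩, k', hk', e', he', c', hc', hrk'⟩
      have hK : Subgroup.closure E ≤ H ⊓ A i := (Subgroup.closure_le _).2 fun g hg => hg.1
      have h3 : r (g * x) * (f (e' * c'))⁻¹ ∈ H ⊓ A i := by
        have := hf (e' * c') k' hk'
        rw [← hrk'] at this
        exact this (hr.mem _)
      have h4 : (r g * e⁻¹)⁻¹ * (r (g * x) * (f (e' * c'))⁻¹) ∈ Subgroup.closure E := by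
        refine Subgroup.subset_closure ⟨mul_mem (inv_mem (hK hre)) h3, e, he, _, hb, _,
          hTf e' he' c' hc', by group⟩
      have h5 := mul_mem hre h4
      rwa [mul_inv_cancel_left] at h5
  refine (Subgroup.fg_iff _).2 ⟨E, le_antisymm ?_ ?_, hEfin⟩
  · exact (Subgroup.closure_le _).2 fun g hg => hg.1
  · intro s hs
    obtain ⟨w, hwZ, rfl, hp⟩ := hDw s hs.1
    obtain ⟨⟨e, he, hre⟩, -⟩ := key w hwZ hp
    have hc := hr.inv_mul_mem h hs.2
    have hK : Subgroup.closure E ≤ H ⊓ A i := (Subgroup.closure_le _).2 fun g hg => hg.1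
    have h1 : w.prod⁻¹ * r w.prod * e⁻¹ ∈ Subgroup.closure E := by
      refine Subgroup.subset_closure ⟨?_, 1, Set.mem_insert _ _, _, Or.inl hc, e, he, by simp⟩
      rw [mul_assoc]
      exact mul_mem (inv_mem hs) (hK hre)
    have h2 := mul_mem hre (inv_mem h1)
    rwa [show r w.prod * e⁻¹ * (w.prod⁻¹ * r w.prod * e⁻¹)⁻¹ = w.prod by group] at h2

/-- Elements of `H` moving one translate of a factor to another are controlled by their length
in the factor. -/
theorem IsAmalgam.exists_wordLength_conj_le (h : IsAmalgam A C) (hC : (C : Set G).Finite)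
    {X : Bool → Set G} (hX : ∀ i, IsSymmGenOf (X i) (A i)) (hQ : ∀ i, HasPropertyQ (A i))
    {H : Subgroup G} {Y : Set G} (hY : IsSymmGenOf Y H) (hH : H.FG) (i : Bool) (d d' : G) :
    ∃ K : ℕ, ∀ g ∈ H, d * g * d'⁻¹ ∈ A i →
      wordLength Y g ≤ K * (wordLength (X i) (d * g * d'⁻¹) + 1) := by
  by_cases hex : ∃ g₀ ∈ H, d * g₀ * d'⁻¹ ∈ A i
  swap
  · exact ⟨0, fun g hg hgA => absurd ⟨g, hg, hgA⟩ hex⟩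
  obtain ⟨g₀, hg₀, hgA₀⟩ := hex
  have hP : (H.map (MulAut.conj d).toMonoidHom).FG := by
    rw [← Group.fg_iff_subgroup_fg] at hH ⊢
    exact Group.fg_of_surjective ((MulAut.conj d).toMonoidHom.subgroupMap_surjective H)
  obtain ⟨W, hW, K₁, hK₁⟩ := (hQ i).exists_wordLength_le (hX i) inf_le_right
    (h.fg_inf hC hX hP i)
  obtain ⟨K₂, hK₂⟩ := hW.exists_wordLength_map_le hY (MulAut.conj d⁻¹).toMonoidHom (by
    rintro _ ⟨⟨g, hg, rfl⟩, -⟩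
    simpa [mul_assoc] using hg)
  refine ⟨K₂ * (K₁ * (wordLength (X i) (d * g₀ * d'⁻¹) + 1)) + wordLength Y g₀,
    fun g hg hgA => ?_⟩
  set m := d * g * d'⁻¹ * (d * g₀ * d'⁻¹)⁻¹ with hm
  have hmd : m = d * (g * g₀⁻¹) * d⁻¹ := by
    rw [hm]
    group
  have hmM : m ∈ H.map (MulAut.conj d).toMonoidHom ⊓ A i :=
    Subgroup.mem_inf.2 ⟨⟨g * g₀⁻¹, H.mul_mem hg (H.inv_mem hg₀), by simp [hmd]⟩,
      (A i).mul_mem hgA ((A i).inv_mem hgA₀)⟩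
  have h1 := hK₁ m hmM
  have h2 := hK₂ m hmM
  have h3 : (MulAut.conj d⁻¹).toMonoidHom m = g * g₀⁻¹ := by
    simp [hmd, mul_assoc]
  rw [h3] at h2
  have h4 := hY.wordLength_mul_le (mul_mem hg (inv_mem hg₀)) hg₀
  rw [inv_mul_cancel_right] at h4
  have h5 := (hX i).wordLength_mul_le hgA (inv_mem hgA₀)
  rw [(hX i).wordLength_inv hgA₀] at h5
  set a := wordLength (X i) (d * g * d'⁻¹)
  set a₀ := wordLength (X i) (d * g₀ * d'⁻¹)
  have h6 : wordLength (X i) m + 1 ≤ (a₀ + 1) * (a + 1) := by nlinarith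
  calc wordLength Y g ≤ K₂ * wordLength W m + wordLength Y g₀ := by omega
    _ ≤ K₂ * (K₁ * ((a₀ + 1) * (a + 1))) + wordLength Y g₀ * (a + 1) := by
        gcongr
        · exact h1.trans (Nat.mul_le_mul_left _ h6)
        · exact Nat.le_mul_of_pos_right _ (Nat.succ_pos a)
    _ = _ := by ring

theorem IsAmalgam.hasPropertyQ (h : IsAmalgam A C) (hC : (C : Set G).Finite)
    {X : Bool → Set G} (hX : ∀ i, IsSymmGenOf (X i) (A i)) (hQ : ∀ i, HasPropertyQ (A i)) :
    HasPropertyQ G := by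
  intro H hH
  obtain ⟨Y, hY⟩ := hH.exists_isSymmGenOf
  have hZ := h.isSymmGenOf_union hX
  set Z := X true ∪ X false with hZdef
  obtain ⟨D, hD, hD1, hDw⟩ := hY.exists_finite_prefix hZ
  -- `T` is a finite set such that `T * H` contains all suffixes and is invariant under `C`
  set T : Set G := Set.image2 (fun c e => c * e⁻¹) C D with hT
  have hTfin : T.Finite := hC.image2 _ hD
  choose K hK using fun i d d' => h.exists_wordLength_conj_le hC hX hQ hY hH i d d'
  obtain ⟨K₁, hK₁⟩ : ∃ K₁, ∀ i, ∀ d ∈ T, ∀ d' ∈ T, K i d d' ≤ K₁ := by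
    obtain ⟨K₁, hK₁⟩ := (Set.finite_univ (α := Bool).prod (hTfin.prod hTfin)).exists_nat_bound
      fun t => K t.1 t.2.1 t.2.2
    exact ⟨K₁, fun i d hd d' hd' => hK₁ (i, d, d') ⟨trivial, hd, hd'⟩⟩
  obtain ⟨K₂, hK₂⟩ := hTfin.exists_nat_bound fun t => wordLength Y t⁻¹
  obtain ⟨K₃, hK₃⟩ : ∃ K₃, ∀ j, ∀ c ∈ C, wordLength (X j) c ≤ K₃ := by
    obtain ⟨K₃, hK₃⟩ := (Set.finite_univ (α := Bool).prod hC).exists_nat_bound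
      fun t => wordLength (X t.1) t.2
    exact ⟨K₃, fun j c hc => hK₃ (j, c) ⟨trivial, hc⟩⟩
  set f : Bool → G → ℕ := fun i b => wordLength (X i) b + 1 with hf
  have hbound : ∀ l i, IsReducedFrom A C i l →
      (∀ s, s <:+ l → ∃ t ∈ T, ∃ k ∈ H, s.prod = t * k) →
      ∀ t ∈ T, ∀ k ∈ H, l.prod = t * k →
      wordLength Y k ≤ K₁ * alternatingCost f i l + K₂ := by
    intro l
    induction l with
    | nil =>
      intro i _ _ t ht k _ heq
      obtain rfl : k = t⁻¹ := by
        rw [List.prod_nil] at heq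
        exact (inv_eq_of_mul_eq_one_right heq.symm).symm
      exact (hK₂ t ht).trans (Nat.le_add_left _ _)
    | cons b l ih =>
      rintro i ⟨hb, -, hl⟩ hs t ht k hk heq
      obtain ⟨t', ht', k', hk', heq'⟩ := hs l (List.suffix_cons b l)
      have h1 := ih (!i) hl (fun s hsl => hs s (hsl.trans (List.suffix_cons b l))) t' ht' k' hk'
        heq'
      have hb' : b = t * (k * k'⁻¹) * t'⁻¹ := by
        rw [List.prod_cons, heq'] at heq
        rw [← mul_assoc, ← heq]
        group
      have h2 := hK i t t' (k * k'⁻¹) (mul_mem hk (inv_mem hk')) (hb' ▸ hb)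
      rw [← hb'] at h2
      have h3 := hY.wordLength_mul_le (mul_mem hk (inv_mem hk')) hk'
      rw [inv_mul_cancel_right] at h3
      have h4 := Nat.mul_le_mul_right (wordLength (X i) b + 1) (hK₁ i t ht t' ht')
      simp only [alternatingCost, hf, mul_add] at h1 h2 h4 ⊢
      omega
  have hmain : ∀ g ∈ H, wordLength Y g ≤ K₁ * ((K₃ + 2) * wordLength Z g) + K₂ := by
    intro g hg
    obtain ⟨w, hw, hwZ, rfl⟩ := hZ.exists_list (g := g) trivial
    obtain ⟨i, l, c, hc, hl, heq, hcost, -⟩ := h.exists_reduced_prod (f := f) (K := K₃ + 2)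
      (S := Set.univ) (w := w) (fun x hx => by
        obtain ⟨j, hxj⟩ := exists_mem_of_mem_union (hwZ x hx)
        have hxA := (hX j).mem hxj
        refine ⟨j, hxA, fun c hc => ?_⟩
        have h1 := wordLength_le_one hxj
        have h2 := hK₃ j c hc
        have h3 := (hX j).wordLength_mul_le hxA (h.le j hc)
        refine ⟨by simp only [hf]; omega, fun b hb => ?_⟩
        have h4 := (hX j).wordLength_mul_le (mul_mem hxA (h.le j hc)) hb
        simp only [hf]
        omega) (by simp)
    obtain ⟨v, hvZ, hvp, hv⟩ := hDw w.prod hg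
    obtain ⟨i', l', c', hc', hl', heq', -, hS⟩ := h.exists_reduced_prod (f := 0) (K := 0)
      (S := {s | ∃ e ∈ D, ∃ k ∈ H, s = e⁻¹ * k}) (w := v)
      (fun x hx => by
        obtain ⟨j, hxj⟩ := exists_mem_of_mem_union (hvZ x hx)
        exact ⟨j, (hX j).mem hxj, by simp⟩) (by
        rintro s ⟨p, rfl⟩
        obtain ⟨k, hk, e, he, hke⟩ := hv p (List.prefix_append _ _)
        refine ⟨e, he, k⁻¹ * w.prod, mul_mem (inv_mem hk) hg, ?_⟩
        rw [← hvp, List.prod_append, hke]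
        group)
    have hll : l.prod = c⁻¹ * c' * l'.prod := by
      rw [mul_assoc, heq', hvp, ← heq, inv_mul_cancel_left]
    have hsuf : ∀ s, s <:+ l → ∃ t ∈ T, ∃ k ∈ H, s.prod = t * k := by
      intro s hs
      obtain ⟨s', hs', c₁, hc₁, h1⟩ := h.exists_suffix_eq hl hl' (mul_mem (inv_mem hc) hc') hll s hs
      obtain ⟨e, he, k, hk, h2⟩ := hS s' hs'
      exact ⟨c₁ * e⁻¹, ⟨c₁, hc₁, e, he, rfl⟩, k, hk, by rw [h1, h2, mul_assoc]⟩
    have h1 := hbound l i hl hsuf c⁻¹ ⟨c⁻¹, inv_mem hc, 1, hD1, by simp⟩ w.prod hg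
      (by rw [← heq, inv_mul_cancel_left])
    rw [← hw]
    exact h1.trans (Nat.add_le_add_right (Nat.mul_le_mul_left _ hcost) _)
  obtain ⟨hY1, hY2⟩ := hY.isSymmGen_preimage_val
  refine ⟨_, hY1, Z, ⟨hZ.finite, hZ.inv_mem, hZ.closure_eq⟩,
    (K₁ * (K₃ + 2) + K₂ + 1 : ℕ), by positivity, fun a => ?_⟩
  rw [← wordLength_image_val, hY2]
  have := hmain a a.2
  have h' : wordLength Y (a : G) ≤ (K₁ * (K₃ + 2) + K₂ + 1) * wordLength Z (a : G) +
      (K₁ * (K₃ + 2) + K₂ + 1) := by nlinarith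
  exact_mod_cast h'

end PropertyQ

/-! ### Hyperbolicity of amalgams -/

section Hyperbolic

theorem Relation.ReflTransGen.exists_of_cover {α : Type*} {R : α → α → Prop} {P Q : α → Prop}
    {a b : α} (hab : Relation.ReflTransGen R a b) (ha : P a) (hb : Q b)
    (h : ∀ c d, R c d → P d ∨ Q d) : ∃ p, P p ∧ (Q p ∨ ∃ q, R p q ∧ Q q) := by
  induction hab using Relation.ReflTransGen.head_induction_on with
  | refl => exact ⟨b, ha, Or.inl hb⟩
  | head hac _ ih =>
    rcases h _ _ hac with hc | hc
    exacts [ih hc, ⟨_, ha, Or.inr ⟨_, hac, hc⟩⟩]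

variable {G : Type u} [Group G] {A : Bool → Subgroup G} {C : Subgroup G}

theorem IsSymmGenOf.isGeodesicDist {Z : Set G} (hZ : IsSymmGenOf Z ⊤) :
    IsGeodesicDist (wordDist Z) where
  self x := by simp [wordDist, wordLength_one]
  symm x y := by
    rw [wordDist, wordDist, ← hZ.wordLength_inv trivial, mul_inv_rev, inv_inv]
  triangle x y z := by
    have := hZ.wordLength_mul_le (g := x⁻¹ * y) (h := y⁻¹ * z) trivial trivial
    rwa [mul_assoc, mul_inv_cancel_left] at this
  exists_between x y k hk := by
    obtain ⟨e, -, h1, h2⟩ := hZ.exists_split (g := x⁻¹ * y) trivial hk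
    refine ⟨x * e, by rwa [wordDist, inv_mul_cancel_left], ?_⟩
    rwa [wordDist, wordDist, mul_inv_rev, mul_assoc]

theorem wordDist_self_mul (Z : Set G) (p e : G) : wordDist Z p (p * e) = wordLength Z e := by
  rw [wordDist, inv_mul_cancel_left]

theorem IsSymmGenOf.wordLength_mono {X Z : Set G} {M : Subgroup G} (hX : IsSymmGenOf X M)
    (hXZ : X ⊆ Z) {g : G} (hg : g ∈ M) : wordLength Z g ≤ wordLength X g := by
  obtain ⟨l, hl, hlX, rfl⟩ := hX.exists_list hg
  exact (wordLength_prod_le fun x hx => hXZ (hlX x hx)).trans hl.le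

theorem subset_union_bool {α : Type*} (X : Bool → Set α) (i : Bool) :
    X i ⊆ X true ∪ X false := by
  cases i
  exacts [Set.subset_union_right, Set.subset_union_left]

/-- The four-point condition for the word metric of `X` on the subgroup `M`. -/
def IsFourPoint (X : Set G) (M : Subgroup G) (D : ℕ) : Prop :=
  ∀ a ∈ M, ∀ b ∈ M, ∀ c ∈ M, ∀ e ∈ M, wordDist X a c + wordDist X b e ≤
    max (wordDist X a b + wordDist X c e) (wordDist X b c + wordDist X a e) + D

theorem IsFourPoint.exists_near_geodesic {X : Set G} {M : Subgroup G} {D : ℕ}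
    (hD : IsFourPoint X M D) (hX : IsSymmGenOf X M) {a b : G} (ha : a ∈ M) (hb : b ∈ M) {E : ℕ}
    (hE : wordLength X a + wordLength X b ≤ wordLength X (a⁻¹ * b) + E) :
    ∃ e ∈ M, wordLength X e ≤ E + D ∧
      wordLength X (e⁻¹ * a) + wordLength X (e⁻¹ * b) = wordLength X (a⁻¹ * b) := by
  obtain ⟨t, ht, h1, h2⟩ := hX.exists_split (mul_mem (inv_mem ha) hb)
    (min_le_right (wordLength X a) _)
  have hat : (a * t)⁻¹ * a = t⁻¹ := by group
  have hat' : (a * t)⁻¹ * b = t⁻¹ * (a⁻¹ * b) := by group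
  have h3 := hD _ (mul_mem ha ht) a ha 1 (one_mem _) b hb
  simp only [wordDist, hat, hat', mul_one, inv_one, one_mul, hX.wordLength_inv ht,
    hX.wordLength_inv (mul_mem ha ht), hX.wordLength_inv ha] at h3
  refine ⟨a * t, mul_mem ha ht, ?_, ?_⟩
  · rcases max_cases (wordLength X t + wordLength X b)
      (wordLength X a + wordLength X (t⁻¹ * (a⁻¹ * b))) with h | h <;> omega
  · rw [hat, hat', hX.wordLength_inv ht]
    omega

/-- A coarse model of the geodesics from `x` to `y`: the points `p` for which, in some translate
`p * A i` separating `x` from `y`, the point `p` is on a geodesic between the projections. -/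
def projSegment (X : Bool → Set G) (C : Subgroup G) (r : Bool → G → G) (x y : G) : Set G :=
  {p | p = x ∨ p = y ∨ ∃ i, (r i (p⁻¹ * x))⁻¹ * r i (p⁻¹ * y) ∉ C ∧
    wordLength (X i) (r i (p⁻¹ * x)) + wordLength (X i) (r i (p⁻¹ * y)) =
      wordLength (X i) ((r i (p⁻¹ * x))⁻¹ * r i (p⁻¹ * y))}

variable {X : Bool → Set G} {r : Bool → G → G} {M D : ℕ}

theorem IsAmalgam.wordDist_le_of_mem_projSegment (h : IsAmalgam A C)
    (hX : ∀ i, IsSymmGenOf (X i) (A i)) (hr : ∀ i, IsProjection A C i (r i))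
    (hM : ∀ i, ∀ c ∈ C, wordLength (X i) c ≤ M)
    (hM' : ∀ i, ∀ s ∈ X true ∪ X false, wordLength (X i) s ≤ M) {x y p : G}
    (hxy : wordDist (X true ∪ X false) x y ≤ 1) (hp : p ∈ projSegment X C r x y) :
    wordDist (X true ∪ X false) x p ≤ 4 * M + 1 := by
  have hZ := h.isSymmGenOf_union hX
  have hd := hZ.isGeodesicDist
  rcases hp with rfl | rfl | ⟨i, hC, hp⟩
  · simp [hd.self]
  · omega
  obtain ⟨l, hl, hlZ, hlp⟩ := hZ.exists_list (g := x⁻¹ * y) trivial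
  rw [wordDist, ← hl] at hxy
  obtain ⟨s, rfl⟩ : ∃ s, l = [s] := by
    rcases l with _ | ⟨s, _ | ⟨t, l⟩⟩
    · obtain rfl : x = y := by simpa [eq_inv_mul_iff_mul_eq] using hlp
      simp at hC
    · exact ⟨s, rfl⟩
    · simp at hxy
  have hs : s ∈ X true ∪ X false := hlZ s (by simp)
  obtain rfl : y = x * s := by
    rw [List.prod_singleton] at hlp
    rw [hlp, mul_inv_cancel_left]
  obtain ⟨j, hsj⟩ := exists_mem_of_mem_union hs
  rw [← mul_assoc] at hC hp
  set g := p⁻¹ * x with hg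
  have hgs : g ∈ A i ∧ s ∈ A i := by
    by_contra hgs
    exact hC ((hr i).inv_mul_mul_mem h ((hX j).mem hsj) (not_and_or.1 hgs))
  have h1 := (hr i).inv_mul_mem h hgs.1
  have h2 := (hr i).inv_mul_mem h (mul_mem hgs.1 hgs.2)
  have h3 : (r i g)⁻¹ * r i (g * s) =
      (g⁻¹ * r i g)⁻¹ * (s * ((g * s)⁻¹ * r i (g * s))) := by group
  have h4 := (hX i).wordLength_mul_le (inv_mem (h.le i h1)) (mul_mem hgs.2 (h.le i h2))
  have h5 := (hX i).wordLength_mul_le hgs.2 (h.le i h2)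
  have h6 := (hX i).wordLength_mul_le ((hr i).mem g) (inv_mem (h.le i h1))
  rw [show r i g * (g⁻¹ * r i g)⁻¹ = g by group] at h6
  rw [h3] at hp
  have h7 := hM i _ (inv_mem h1)
  have h8 := hM i _ h2
  have h9 := hM' i s hs
  have h10 := (hX i).wordLength_mono (subset_union_bool X i) hgs.1
  rw [hd.symm, wordDist, ← hg]
  omega

theorem exists_mem_projSegment
    (hX : ∀ i, IsSymmGenOf (X i) (A i)) (hr : ∀ i, IsProjection A C i (r i))
    (hD : ∀ i, IsFourPoint (X i) (A i) D) {i : Bool} {p x y : G} {E : ℕ}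
    (hC : (r i (p⁻¹ * x))⁻¹ * r i (p⁻¹ * y) ∉ C)
    (hE : wordLength (X i) (r i (p⁻¹ * x)) + wordLength (X i) (r i (p⁻¹ * y)) ≤
      wordLength (X i) ((r i (p⁻¹ * x))⁻¹ * r i (p⁻¹ * y)) + E) :
    ∃ q ∈ projSegment X C r x y, wordDist (X true ∪ X false) p q ≤ E + D := by
  obtain ⟨e, he, h1, h2⟩ := (hD i).exists_near_geodesic (hX i) ((hr i).mem _) ((hr i).mem _) hE
  have hproj : ∀ z, r i ((p * e)⁻¹ * z) = e⁻¹ * r i (p⁻¹ * z) := fun z => by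
    rw [mul_inv_rev, mul_assoc, (hr i).mul_left _ (inv_mem he)]
  refine ⟨p * e, Or.inr (Or.inr ⟨i, ?_⟩), ?_⟩
  · rw [hproj, hproj, h2, mul_inv_rev, inv_inv, mul_assoc, mul_inv_cancel_left]
    exact ⟨hC, rfl⟩
  · rw [wordDist_self_mul]
    exact ((hX i).wordLength_mono (subset_union_bool X i) he).trans h1

theorem IsAmalgam.projSegment_thin (h : IsAmalgam A C)
    (hX : ∀ i, IsSymmGenOf (X i) (A i)) (hr : ∀ i, IsProjection A C i (r i))
    (hD : ∀ i, IsFourPoint (X i) (A i) D) (hM : ∀ i, ∀ c ∈ C, wordLength (X i) c ≤ M)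
    (x y z : G) {p : G} (hp : p ∈ projSegment X C r x z) :
    ∃ q, (q ∈ projSegment X C r x y ∨ q ∈ projSegment X C r y z) ∧
      wordDist (X true ∪ X false) p q ≤ 2 * (M + D) + D := by
  have hd := (h.isSymmGenOf_union hX).isGeodesicDist
  rcases hp with rfl | rfl | ⟨i, hC, hp⟩
  · exact ⟨p, Or.inl (Or.inl rfl), by simp [hd.self]⟩
  · exact ⟨p, Or.inr (Or.inr (Or.inl rfl)), by simp [hd.self]⟩
  have left := exists_mem_projSegment (E := 2 * (M + D)) hX hr hD (i := i) (p := p) (x := x)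
    (y := y)
  have right := exists_mem_projSegment (E := 2 * (M + D)) hX hr hD (i := i) (p := p) (x := y)
    (y := z)
  have ha := (hr i).mem (p⁻¹ * x)
  have hb := (hr i).mem (p⁻¹ * y)
  have hc := (hr i).mem (p⁻¹ * z)
  set a := r i (p⁻¹ * x)
  set b := r i (p⁻¹ * y)
  set c := r i (p⁻¹ * z)
  have h1 := hD i a ha b hb c hc 1 (one_mem _)
  simp only [wordDist, mul_one, (hX i).wordLength_inv ha, (hX i).wordLength_inv hb,
    (hX i).wordLength_inv hc] at h1
  have hab := (hX i).wordLength_mul_le hb (inv_mem (mul_mem (inv_mem ha) hb))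
  have hcb := (hX i).wordLength_mul_le hb (mul_mem (inv_mem hb) hc)
  rw [(hX i).wordLength_inv (mul_mem (inv_mem ha) hb),
    show b * (a⁻¹ * b)⁻¹ = a by group] at hab
  rw [mul_inv_cancel_left] at hcb
  by_cases hcase : wordLength (X i) a + wordLength (X i) b ≤ wordLength (X i) (a⁻¹ * b) + D
  · by_cases habC : a⁻¹ * b ∈ C
    · have hbcC : b⁻¹ * c ∉ C := fun hbc => hC <| by
        have := mul_mem habC hbc
        rwa [mul_assoc, mul_inv_cancel_left] at this
      have h2 := hM i _ habC
      obtain ⟨q, hq, hpq⟩ := right hbcC (by omega)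
      exact ⟨q, Or.inr hq, hpq⟩
    · obtain ⟨q, hq, hpq⟩ := left habC (by omega)
      exact ⟨q, Or.inl hq, hpq⟩
  · have hcase' : wordLength (X i) b + wordLength (X i) c ≤ wordLength (X i) (b⁻¹ * c) + D := by
      rcases max_cases (wordLength (X i) (a⁻¹ * b) + wordLength (X i) c)
        (wordLength (X i) (b⁻¹ * c) + wordLength (X i) a) with h | h <;> omega
    by_cases hbcC : b⁻¹ * c ∈ C
    · have habC : a⁻¹ * b ∉ C := fun hab => hC <| by
        have := mul_mem hab hbcC
        rwa [mul_assoc, mul_inv_cancel_left] at this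
      have h2 := hM i _ hbcC
      obtain ⟨q, hq, hpq⟩ := left habC (by omega)
      exact ⟨q, Or.inl hq, hpq⟩
    · obtain ⟨q, hq, hpq⟩ := right hbcC (by omega)
      exact ⟨q, Or.inr hq, hpq⟩

/-- The sets `projSegment X C r x y` are coarsely connected. -/
theorem IsAmalgam.reflTransGen_projSegment (h : IsAmalgam A C)
    (hX : ∀ i, IsSymmGenOf (X i) (A i)) (hr : ∀ i, IsProjection A C i (r i))
    (hM : ∀ i, ∀ c ∈ C, wordLength (X i) c ≤ M) (x y : G) :
    Relation.ReflTransGen (fun p q => q ∈ projSegment X C r x y ∧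
      wordDist (X true ∪ X false) p q ≤ 2 * M + 1) x y := by
  have hZ := h.isSymmGenOf_union hX
  have hd := hZ.isGeodesicDist
  have hMZ : ∀ c ∈ C, ∀ p, wordDist (X true ∪ X false) p (p * c) ≤ M := fun c hc p => by
    rw [wordDist_self_mul]
    exact ((hX true).wordLength_mono (subset_union_bool X true) (h.le true hc)).trans
      (hM true c hc)
  set R : G → G → Prop := fun p q => q ∈ projSegment X C r x y ∧
    wordDist (X true ∪ X false) p q ≤ 2 * M + 1 with hR
  have key : ∀ (l : List G) (i : Bool) (u v : G), IsReducedFrom A C i l → r i (v⁻¹ * x) ∈ C →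
      y = v * l.prod → wordDist (X true ∪ X false) u v ≤ M → Relation.ReflTransGen R u y := by
    intro l
    induction l with
    | nil =>
      intro i u v _ _ hy huv
      rw [List.prod_nil, mul_one] at hy
      exact Relation.ReflTransGen.single ⟨Or.inr (Or.inl rfl), by rw [hy]; omega⟩
    | cons b l ih =>
      rintro i u v ⟨hb, hbC, hl⟩ hv hy huv
      set c := r i (v⁻¹ * x) with hc
      have hc' := (hr i).mem_of_isReducedFrom h hl
      set c' := r i l.prod with hc'def
      have hgA : c⁻¹ * b * c' ∈ A i :=
        mul_mem (mul_mem (inv_mem (h.le i hv)) hb) (h.le i hc')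
      have hgC : c⁻¹ * b * c' ∉ C := by
        rwa [C.mul_mem_cancel_right hc', C.mul_mem_cancel_left (inv_mem hv)]
      obtain ⟨e, he0, hen, heA, hstep, hsplit, -⟩ := (hX i).exists_geodesic hgA
      have hmem : ∀ k, v * c * e k ∈ projSegment X C r x y := by
        intro k
        have h1 : r i ((v * c * e k)⁻¹ * x) = (e k)⁻¹ := by
          rw [show (v * c * e k)⁻¹ * x = (e k)⁻¹ * c⁻¹ * (v⁻¹ * x) by group,
            (hr i).mul_left _ (mul_mem (inv_mem (heA k)) (inv_mem (h.le i hv))), ← hc,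
            inv_mul_cancel_right]
        have h2 : r i ((v * c * e k)⁻¹ * y) = (e k)⁻¹ * (c⁻¹ * b * c') := by
          rw [hy, List.prod_cons,
            show (v * c * e k)⁻¹ * (v * (b * l.prod)) = (e k)⁻¹ * (c⁻¹ * b) * l.prod by group,
            (hr i).mul_left _ (mul_mem (inv_mem (heA k)) (mul_mem (inv_mem (h.le i hv)) hb)),
            ← hc'def, mul_assoc, mul_assoc]
        refine Or.inr (Or.inr ⟨i, ?_⟩)
        rw [h1, h2, inv_inv, mul_inv_cancel_left, (hX i).wordLength_inv (heA k)]
        exact ⟨hgC, hsplit k⟩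
      have hchain : ∀ k, Relation.ReflTransGen R u (v * c * e k) := by
        intro k
        induction k with
        | zero =>
          refine Relation.ReflTransGen.single ⟨hmem 0, ?_⟩
          have h1 := hd.triangle u v (v * c)
          have h2 := hMZ c hv v
          rw [he0, mul_one]
          omega
        | succ k ihk =>
          refine ihk.tail ⟨hmem (k + 1), ?_⟩
          rw [wordDist, show (v * c * e k)⁻¹ * (v * c * e (k + 1)) = (e k)⁻¹ * e (k + 1) by group]
          have h1 := (hX i).wordLength_mono (subset_union_bool X i)
            (mul_mem (inv_mem (heA k)) (heA (k + 1)))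
          have h2 := hstep k
          omega
      have hend := hchain (wordLength (X i) (c⁻¹ * b * c'))
      rw [hen, show v * c * (c⁻¹ * b * c') = v * b * c' by group] at hend
      refine hend.trans (ih (!i) _ (v * b) hl ?_ (by rw [hy, List.prod_cons, mul_assoc]) ?_)
      · obtain ⟨t, ht, heq⟩ := (hr i).exists_eq (v⁻¹ * x)
        have h1 : IsReducedFrom A C (!!i) ((b⁻¹ * c) :: t) := by
          rw [Bool.not_not]
          refine ⟨mul_mem (inv_mem hb) (h.le i hv), ?_, ht⟩
          rwa [C.mul_mem_cancel_right hv, inv_mem_iff]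
        have h2 := (hr (!i)).mem_of_isReducedFrom h h1
        rwa [List.prod_cons, mul_assoc, ← heq, ← mul_assoc, ← mul_inv_rev] at h2
      · rw [hd.symm]
        exact hMZ c' hc' _
  obtain ⟨i, l, c, hc, hl, hcl⟩ := h.exists_reduced (x⁻¹ * y)
  refine key l i x (x * c) hl ?_ (by rw [mul_assoc, hcl, mul_inv_cancel_left]) (hMZ c hc x)
  rw [mul_inv_rev, inv_mul_cancel_right, ← mul_one c⁻¹,
    (hr i).mul_left _ (inv_mem (h.le i hc))]
  exact mul_mem (inv_mem hc) ((hr i).one_mem h)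

theorem IsAmalgam.isThinFamily_projSegment (h : IsAmalgam A C)
    (hX : ∀ i, IsSymmGenOf (X i) (A i)) (hr : ∀ i, IsProjection A C i (r i))
    (hD : ∀ i, IsFourPoint (X i) (A i) D) (hM : ∀ i, ∀ c ∈ C, wordLength (X i) c ≤ M)
    (hM' : ∀ i, ∀ s ∈ X true ∪ X false, wordLength (X i) s ≤ M) :
    IsThinFamily (wordDist (X true ∪ X false)) (projSegment X C r) (4 * M + 3 * D + 1) where
  near x y hxy p hp :=
    (h.wordDist_le_of_mem_projSegment hX hr hM hM' hxy hp).trans (by omega)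
  thin x y z p hp := by
    obtain ⟨q, hq, hpq⟩ := h.projSegment_thin hX hr hD hM x y z hp
    exact ⟨q, hq, hpq.trans (by omega)⟩
  center x y z := by
    have hd := (h.isSymmGenOf_union hX).isGeodesicDist
    obtain ⟨p, ⟨hp, q, hq, hpq⟩, hQ⟩ := (h.reflTransGen_projSegment hX hr hM x z).exists_of_cover
      (P := fun p => p ∈ projSegment X C r x z ∧ ∃ q ∈ projSegment X C r x y,
        wordDist (X true ∪ X false) p q ≤ 2 * (M + D) + D)
      (Q := fun p => ∃ q ∈ projSegment X C r y z,
        wordDist (X true ∪ X false) p q ≤ 2 * (M + D) + D)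
      ⟨Or.inl rfl, x, Or.inl rfl, by simp [hd.self]⟩
      ⟨z, Or.inr (Or.inl rfl), by simp [hd.self]⟩
      (by
        rintro _ p ⟨hp, -⟩
        obtain ⟨q, hq | hq, hpq⟩ := h.projSegment_thin hX hr hD hM x y z hp
        exacts [Or.inl ⟨hp, q, hq, hpq⟩, Or.inr ⟨q, hq, hpq⟩])
    refine ⟨p, hp, q, hq, ?_⟩
    rcases hQ with ⟨q', hq', hpq'⟩ | ⟨s, ⟨-, hps⟩, q', hq', hsq'⟩
    · exact ⟨q', hq', by omega, by omega⟩
    · have := hd.triangle p s q'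
      exact ⟨q', hq', by omega, by omega⟩

theorem IsWordHyperbolic.exists_isFourPoint {M : Subgroup G} (hM : IsWordHyperbolic M) :
    ∃ X, IsSymmGenOf X M ∧ ∃ D, IsFourPoint X M D := by
  obtain ⟨X, hX, δ, hδ, hyp⟩ := hM
  have hX' := hX.isSymmGenOf_image_val
  refine ⟨Subtype.val '' X, hX', ⌈2 * δ⌉₊, fun a ha b hb c hc e he => ?_⟩
  have key : ∀ x y : M, wordDist (Subtype.val '' X) (x : G) y = wordDist X x y := fun x y =>
    wordLength_image_val X (x⁻¹ * y)
  have h1 := hyp ⟨a, ha⟩ ⟨b, hb⟩ ⟨c, hc⟩ ⟨e, he⟩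
  simp only [gromovProd, ← key, ge_iff_le] at h1
  have h2 := Nat.le_ceil (2 * δ)
  rify
  rw [tsub_le_iff_right, min_le_iff] at h1
  rw [← max_add_add_right, le_max_iff]
  rcases h1 with h1 | h1
  · left
    linarith
  · right
    linarith

/-- An amalgam of word hyperbolic groups over a finite subgroup is word hyperbolic. -/
theorem IsAmalgam.isWordHyperbolic (h : IsAmalgam A C) (hC : (C : Set G).Finite)
    (hX : ∀ i, IsSymmGenOf (X i) (A i)) (hyp : ∀ i, ∃ D, IsFourPoint (X i) (A i) D) :
    IsWordHyperbolic G := by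
  have hZ := h.isSymmGenOf_union hX
  have hd := hZ.isGeodesicDist
  choose r hr using h.exists_isProjection
  choose D hD using hyp
  have hD' : ∀ i, IsFourPoint (X i) (A i) (D true + D false) := fun i a ha b hb c hc e he =>
    (hD i a ha b hb c hc e he).trans (by cases i <;> omega)
  obtain ⟨M, hM⟩ := (Set.finite_univ (α := Bool).prod (hC.union hZ.finite)).exists_nat_bound
    fun t => wordLength (X t.1) t.2
  obtain ⟨K, hK⟩ := (h.isThinFamily_projSegment hX hr hD'
    (fun i c hc => hM (i, c) ⟨trivial, Or.inl hc⟩)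
    (fun i s hs => hM (i, s) ⟨trivial, Or.inr hs⟩)).exists_four_point hd
  refine ⟨_, ⟨hZ.finite, hZ.inv_mem, hZ.closure_eq⟩, K, K.cast_nonneg, fun x y z w => ?_⟩
  have h1 := hK x y z w
  rify at h1
  simp only [gromovProd, ge_iff_le]
  rw [tsub_le_iff_right, min_le_iff]
  rw [← max_add_add_right, le_max_iff] at h1
  have h2 : (0 : ℝ) ≤ K := K.cast_nonneg
  rcases h1 with h1 | h1
  · left
    linarith
  · right
    linarith

end Hyperbolic

/-- **Corollary 2.** Amalgam of two (Q)-groups over a finite subgroup is word hyperbolic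
with property (Q). -/
theorem amalgam_over_finite_hyperbolic_and_propertyQ {G : Type u} [Group G]
    (A₁ A₂ C : Subgroup G)
    (amal : IsAmalgamatedFreeProduct A₁ A₂ C)
    (hC : (C : Set G).Finite)
    (hyp₁ : IsWordHyperbolic ↥A₁) (hyp₂ : IsWordHyperbolic ↥A₂)
    (hQ₁ : HasPropertyQ ↥A₁) (hQ₂ : HasPropertyQ ↥A₂) :
    IsWordHyperbolic G ∧ HasPropertyQ G := by
  have h := amal.isAmalgam
  obtain ⟨X₁, hX₁, hD₁⟩ := hyp₁.exists_isFourPoint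
  obtain ⟨X₂, hX₂, hD₂⟩ := hyp₂.exists_isFourPoint
  have hX : ∀ i, IsSymmGenOf (cond i X₁ X₂) (cond i A₁ A₂) := by
    rintro (_ | _)
    exacts [hX₂, hX₁]
  refine ⟨h.isWordHyperbolic hC hX ?_, h.hasPropertyQ hC hX ?_⟩
  · rintro (_ | _)
    exacts [hD₂, hD₁]
  · rintro (_ | _)
    exacts [hQ₂, hQ₁]
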